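/- Let q be an odd integer ≥ 3 and r the multiplicative order of 2 modulo q. Then the number of semi-bad classes modulo q equals |E'(q)| = r·(2^{ω(q)−1} − 1) if r is even and 2 is not a square modulo q, and |E'(q)| = r·(2^{ω(q)} − 1) otherwise (in particular, when r is odd 2 is automatically a square modulo q). -/

import Mathlib

/-!
Let `G = (ZMod q)ˣ`, let `u ∈ G` be the class of `2`, let `H = ⟨u⟩`, and let `σ : G → G` be the
squaring homomorphism. Then `E(q)` is `H` and `E'(q)` is `σ⁻¹(H) \ H`, where `H ≤ σ⁻¹(H)`, so
`|E'(q)| = |σ⁻¹(H)| - r`. Moreover `|σ⁻¹(H)| = |ker σ| * |σ(G) ∩ H|`.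

* `|ker σ| = 2 ^ ω(q)`: by the Chinese remainder theorem it is enough to treat an odd prime power,
  where the unit group is cyclic of even order (`card_ker_sq`).
* If `u` is a square, then `σ(G) ∩ H = H` has order `r`. Otherwise a power `u ^ k` is a square exactly
  when `k` is even, so `σ(G) ∩ H = ⟨u ^ 2⟩`, which has order `r / 2` when `r` is even
  (`range_inf_zpowers`).

Finally, if `r` is odd then `2 = (2 ^ ((r + 1) / 2)) ^ 2` is a square.
-/

/-- The set `E(q)` of bad classes: the powers `2^i`, `0 ≤ i ≤ r - 1`, in `ℤ/qℤ`,
where `r` is the multiplicative order of `2` modulo `q`. -/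
def badE (q : ℕ) : Set (ZMod q) := {x | ∃ i < orderOf (2 : ZMod q), x = 2 ^ i}

/-- A class of `(ℤ/qℤ)*` is semi-bad if it does not belong to `E(q)` but its square does. -/
def SemiBad (q : ℕ) (x : ZMod q) : Prop := IsUnit x ∧ x ∉ badE q ∧ x ^ 2 ∈ badE q

/-- The set `E'(q)` of semi-bad classes. -/
def semiBadE (q : ℕ) : Set (ZMod q) := {x | SemiBad q x}

/-- The number of square roots of `1` is multiplicative on coprime moduli. -/
lemma card_ker_sq_mul (a b : ℕ) (h : a.Coprime b) :
    Nat.card (powMonoidHom 2 : (ZMod (a * b))ˣ →* _).ker =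
      Nat.card (powMonoidHom 2 : (ZMod a)ˣ →* _).ker *
        Nat.card (powMonoidHom 2 : (ZMod b)ˣ →* _).ker := by
  let e : (ZMod (a * b))ˣ ≃* (ZMod a)ˣ × (ZMod b)ˣ :=
    (Units.mapEquiv (ZMod.chineseRemainder h).toMulEquiv).trans MulEquiv.prodUnits
  rw [← Nat.card_prod]
  refine Nat.card_congr ((e.toEquiv.subtypeEquiv fun x => ?_).trans
    (Equiv.subtypeProdEquivProd
      (p := fun x => x ∈ (powMonoidHom 2 : (ZMod a)ˣ →* _).ker)
      (q := fun x => x ∈ (powMonoidHom 2 : (ZMod b)ˣ →* _).ker)))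
  simp only [MonoidHom.mem_ker, powMonoidHom_apply]
  change _ ↔ (e x).1 ^ 2 = 1 ∧ (e x).2 ^ 2 = 1
  rw [← e.map_eq_one_iff, map_pow, Prod.ext_iff]
  rfl

lemma card_ker_sq (q : ℕ) (hodd : Odd q) :
    Nat.card (powMonoidHom 2 : (ZMod q)ˣ →* _).ker = 2 ^ q.primeFactors.card := by
  induction q using Nat.recOnPosPrimePosCoprime with
  | zero => simp at hodd
  | one => simp
  | prime_pow p n hp hn =>
    have hp2 : p ≠ 2 := by
      rintro rfl
      exact Nat.not_even_iff_odd.2 hodd (even_two.pow_of_ne_zero hn.ne')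
    have : IsCyclic (ZMod (p ^ n))ˣ := ZMod.isCyclic_units_of_prime_pow p hp hp2 n
    have : NeZero (p ^ n) := ⟨pow_ne_zero _ hp.ne_zero⟩
    have h2 : 2 < p ^ n :=
      (lt_of_le_of_ne hp.two_le hp2.symm).trans_le (Nat.le_self_pow hn.ne' p)
    rw [IsCyclic.card_powMonoidHom_ker, Nat.card_eq_fintype_card, ZMod.card_units_eq_totient,
      Nat.gcd_eq_right (Nat.totient_even h2).two_dvd, Nat.primeFactors_prime_pow hn.ne' hp]
    simp
  | coprime a b ha hb hab iha ihb =>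
    rw [Nat.odd_mul] at hodd
    rw [card_ker_sq_mul a b hab, iha hodd.1, ihb hodd.2, ← pow_add, hab.primeFactors_mul,
      Finset.card_union_of_disjoint hab.disjoint_primeFactors]

lemma card_comap_eq {G : Type*} [Group G] [Finite G] (f : G →* G) (H : Subgroup G) :
    Nat.card (H.comap f) = Nat.card f.ker * Nat.card (f.range ⊓ H : Subgroup G) := by
  rw [← Subgroup.map_comap_eq, ← Subgroup.relIndex_ker, ← Subgroup.relIndex_bot_left,
    ← Subgroup.relIndex_bot_left]
  exact (Subgroup.relIndex_mul_relIndex _ _ _ bot_le (f.ker_le_comap H)).symm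

lemma range_inf_zpowers {G : Type*} [CommGroup G] (u : G)
    (hu : u ∉ (powMonoidHom 2 : G →* G).range) :
    (powMonoidHom 2 : G →* G).range ⊓ Subgroup.zpowers u = Subgroup.zpowers (u ^ 2) := by
  have hsq (y : G) : y ^ 2 ∈ (powMonoidHom 2 : G →* G).range := ⟨y, rfl⟩
  apply le_antisymm
  · rintro x ⟨hx, k, rfl⟩
    change u ^ k ∈ (powMonoidHom 2 : G →* G).range at hx
    change u ^ k ∈ _
    obtain ⟨m, rfl | rfl⟩ := k.even_or_odd'
    · exact ⟨m, by simp [zpow_mul, zpow_ofNat]⟩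
    · refine absurd ?_ hu
      have h := mul_mem hx (inv_mem (hsq (u ^ m)))
      have e : u ^ (2 * m + 1) * ((u ^ m) ^ 2)⁻¹ = u := by
        rw [zpow_add, mul_comm 2 m, zpow_mul, zpow_ofNat, zpow_one]
        simp
      rwa [e] at h
  · rw [Subgroup.zpowers_le]
    exact ⟨hsq u, Subgroup.npow_mem_zpowers u 2⟩

lemma image_zpowers_eq_badE (q : ℕ) [NeZero q] (u : (ZMod q)ˣ) (hu : (u : ZMod q) = 2) :
    Units.val '' (Subgroup.zpowers u : Set (ZMod q)ˣ) = badE q := by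
  classical
  ext x
  simp only [Set.mem_image, SetLike.mem_coe, mem_zpowers_iff_mem_range_orderOf, Finset.mem_image,
    Finset.mem_range, badE, Set.mem_ofPred_eq, ← hu, orderOf_units]
  constructor
  · rintro ⟨_, ⟨i, hi, rfl⟩, rfl⟩
    exact ⟨i, hi, by simp⟩
  · rintro ⟨i, hi, rfl⟩
    exact ⟨_, ⟨i, hi, rfl⟩, by simp⟩

/-- `E'(q)` consists of the units whose square lies in `⟨2⟩` but which are not themselves there. -/
lemma ncard_semiBadE (q : ℕ) [NeZero q] (u : (ZMod q)ˣ) (hu : (u : ZMod q) = 2) :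
    (semiBadE q).ncard =
      Nat.card ((Subgroup.zpowers u).comap (powMonoidHom 2)) - Nat.card (Subgroup.zpowers u) := by
  have hval (y : (ZMod q)ˣ) : (y : ZMod q) ∈ badE q ↔ y ∈ Subgroup.zpowers u := by
    rw [← image_zpowers_eq_badE q u hu, Units.val_injective.mem_set_image, SetLike.mem_coe]
  have himg : semiBadE q = Units.val ''
      (((Subgroup.zpowers u).comap (powMonoidHom 2) : Set (ZMod q)ˣ) \ Subgroup.zpowers u) := by
    ext x
    constructor
    · rintro ⟨⟨y, rfl⟩, h1, h2⟩
      rw [← Units.val_pow_eq_pow_val, hval] at h2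
      rw [hval] at h1
      exact ⟨y, ⟨h2, h1⟩, rfl⟩
    · rintro ⟨y, ⟨h2, h1⟩, rfl⟩
      refine ⟨y.isUnit, (hval y).not.2 h1, ?_⟩
      rw [← Units.val_pow_eq_pow_val, hval]
      exact h2
  have hsub : (Subgroup.zpowers u : Set (ZMod q)ˣ) ⊆
      ((Subgroup.zpowers u).comap (powMonoidHom 2) : Subgroup (ZMod q)ˣ) :=
    fun y hy => pow_mem (show y ∈ Subgroup.zpowers u from hy) 2
  rw [himg, Set.ncard_image_of_injective _ Units.val_injective, Set.ncard_sdiff hsub]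
  rfl

/-- `|E'(q)| = r(2^{ω(q)−1} − 1)` if `r` is even and `2` is not a square modulo `q`, and
`|E'(q)| = r(2^{ω(q)} − 1)` otherwise; in particular, when `r` is odd, `2` is automatically
a square modulo `q`. -/
theorem stmt3 (q : ℕ) (hq : 3 ≤ q) (hodd : Odd q) :
    ((Even (orderOf (2 : ZMod q)) ∧ ¬ ∃ x : ZMod q, x ^ 2 = 2) →
        (semiBadE q).ncard = orderOf (2 : ZMod q) * (2 ^ (q.primeFactors.card - 1) - 1)) ∧
    (¬ (Even (orderOf (2 : ZMod q)) ∧ ¬ ∃ x : ZMod q, x ^ 2 = 2) →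
        (semiBadE q).ncard = orderOf (2 : ZMod q) * (2 ^ q.primeFactors.card - 1)) ∧
    (Odd (orderOf (2 : ZMod q)) → ∃ x : ZMod q, x ^ 2 = 2) := by
  have : NeZero q := ⟨by omega⟩
  have h2 : IsUnit (2 : ZMod q) :=
    (ZMod.isUnit_iff_coprime 2 q).2 (Nat.coprime_two_left.2 hodd)
  obtain ⟨u, hu⟩ := h2
  have hr : orderOf (2 : ZMod q) = orderOf u := by rw [← hu, orderOf_units]
  have hsq : (∃ x : ZMod q, x ^ 2 = 2) ↔ u ∈ (powMonoidHom 2 : (ZMod q)ˣ →* _).range := by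
    constructor
    · rintro ⟨x, hx⟩
      have hxu : IsUnit x := (isUnit_pow_iff two_ne_zero).1 (hx ▸ hu ▸ u.isUnit)
      obtain ⟨y, rfl⟩ := hxu
      exact ⟨y, Units.ext (by simpa [hu] using hx)⟩
    · rintro ⟨y, hy⟩
      exact ⟨y, by rw [← hu, ← hy]; simp⟩
  have hoddsq : Odd (orderOf (2 : ZMod q)) → ∃ x : ZMod q, x ^ 2 = 2 := by
    rintro ⟨k, hk⟩
    refine ⟨2 ^ (k + 1), ?_⟩
    rw [← pow_mul, show (k + 1) * 2 = (2 * k + 1) + 1 by ring, ← hk, pow_succ, pow_orderOf_eq_one,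
      one_mul]
  have hcard := ncard_semiBadE q u hu
  rw [card_comap_eq, card_ker_sq q hodd, Nat.card_zpowers, ← hr] at hcard
  refine ⟨fun ⟨⟨k, hk⟩, hns⟩ => ?_, fun h => ?_, hoddsq⟩
  · have hpos : 0 < q.primeFactors.card :=
      Finset.card_pos.2 (Nat.nonempty_primeFactors.2 (by omega))
    obtain ⟨w, hw⟩ := Nat.exists_eq_add_of_lt hpos
    rw [zero_add] at hw
    rw [range_inf_zpowers u (hsq.not.1 hns), Nat.card_zpowers, orderOf_pow, ← hr,
      Nat.gcd_eq_right (Even.two_dvd ⟨k, hk⟩), hw] at hcard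
    have hk2 : orderOf (2 : ZMod q) / 2 = k := by omega
    rw [hcard, hk2, hw, Nat.add_sub_cancel, hk, Nat.mul_sub, pow_succ]
    congr 1 <;> ring
  · have hs : ∃ x : ZMod q, x ^ 2 = 2 := by
      by_contra hns
      exact h ⟨Nat.not_odd_iff_even.1 fun ho => hns (hoddsq ho), hns⟩
    rw [inf_eq_right.2 (Subgroup.zpowers_le.2 (hsq.1 hs)), Nat.card_zpowers, ← hr] at hcard
    rw [hcard, Nat.mul_sub, mul_one, mul_comm]
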